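/- arXiv:1310.8010 — 6 statements merged into one kernel-verified Lean document; each statement's English description precedes it below -/
import Mathlib

section
/- A Hilbert–Schmidt operator A on H belongs to HS₀ if and only if there exists a finite-rank orthogonal projection P : H → H such that the range of P is contained in W₊, P extends continuously to W, and A = P ∘ A ∘ P. -/
open scoped ENNReal

noncomputable section

/-- The squared Hilbert–Schmidt norm of a continuous linear operator `A` on a real
Hilbert space, computed with respect to a Hilbert basis `b`:
`‖A‖_HS² = ∑ i, ‖A (b i)‖²` (valued in `ℝ≥0∞`). -/
def hsNormSq {H : Type*} [NormedAddCommGroup H] [InnerProductSpace ℝ H] {ι : Type*}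
    (b : HilbertBasis ι ℝ H) (A : H →L[ℝ] H) : ℝ≥0∞ :=
  ∑' i, (‖A (b i)‖₊ : ℝ≥0∞) ^ 2

/-- `A` is Hilbert–Schmidt: its Hilbert–Schmidt norm (w.r.t. any Hilbert basis) is finite. -/
def IsHilbertSchmidt {H : Type*} [NormedAddCommGroup H] [InnerProductSpace ℝ H]
    (A : H →L[ℝ] H) : Prop :=
  ∀ ⦃ι : Type⦄ (b : HilbertBasis ι ℝ H), hsNormSq b A < ∞

/-- `W₊`: the set of `h ∈ H` such that the functional `k ↦ ⟨k, h⟩_H` extends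
continuously to `W` (through the embedding `i : H → W`). -/
def Wplus {H W : Type*} [NormedAddCommGroup H] [InnerProductSpace ℝ H]
    [NormedAddCommGroup W] [NormedSpace ℝ W] (i : H →L[ℝ] W) : Set H :=
  {h | ∃ φ : W →L[ℝ] ℝ, ∀ k : H, φ (i k) = (inner ℝ k h : ℝ)}

/-- `A : H → H` extends continuously to `W`: there is a continuous linear
`Ā : W → H` with `Ā ∘ i = A`. -/
def ExtendsContinuously {H W : Type*} [NormedAddCommGroup H] [InnerProductSpace ℝ H]
    [NormedAddCommGroup W] [NormedSpace ℝ W] (i : H →L[ℝ] W) (A : H →L[ℝ] H) : Prop :=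
  ∃ Abar : W →L[ℝ] H, ∀ h : H, Abar (i h) = A h

/-- Membership in `HS₀`: Hilbert–Schmidt operators with finite-dimensional range
contained in `W₊` which extend continuously to `W`. -/
def MemHS0 {H W : Type*} [NormedAddCommGroup H] [InnerProductSpace ℝ H]
    [NormedAddCommGroup W] [NormedSpace ℝ W] (i : H →L[ℝ] W) (A : H →L[ℝ] H) : Prop :=
  IsHilbertSchmidt A ∧ FiniteDimensional ℝ (LinearMap.range (A : H →ₗ[ℝ] H)) ∧
    Set.range A ⊆ Wplus i ∧ ExtendsContinuously i A

/-- A Hilbert–Schmidt operator `A` on `H` belongs to `HS₀` if and only if there is a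
finite-rank orthogonal projection `P` (i.e. a self-adjoint idempotent with
finite-dimensional range) whose range is contained in `W₊`, which extends continuously
to `W`, and such that `A = P ∘ A ∘ P`. -/
theorem hs0_iff_exists_projection
    {H W : Type*} [NormedAddCommGroup H] [InnerProductSpace ℝ H] [CompleteSpace H]
    [TopologicalSpace.SeparableSpace H]
    [NormedAddCommGroup W] [NormedSpace ℝ W] [CompleteSpace W]
    [TopologicalSpace.SeparableSpace W]
    (i : H →L[ℝ] W) (hi : Function.Injective i) (hiDense : DenseRange i)
    (A : H →L[ℝ] H) (hA : IsHilbertSchmidt A) :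
    MemHS0 i A ↔
      ∃ P : H →L[ℝ] H,
        (∀ x y : H, (inner ℝ (P x) y : ℝ) = (inner ℝ x (P y) : ℝ)) ∧
        P ∘L P = P ∧
        FiniteDimensional ℝ (LinearMap.range (P : H →ₗ[ℝ] H)) ∧
        Set.range P ⊆ Wplus i ∧
        ExtendsContinuously i P ∧
        A = P ∘L A ∘L P := by
  constructor
  · rintro ⟨-, hfin, hW, Abar, hAbar⟩
    set B : H →L[ℝ] H := ContinuousLinearMap.adjoint A with hB
    set R : Submodule ℝ H := LinearMap.range (A : H →ₗ[ℝ] H) with hR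
    have hBrange : ∀ y, B y ∈ R.map (B : H →ₗ[ℝ] H) := by
      intro y
      refine ⟨R.starProjection y, Submodule.starProjection_apply_mem R y, ?_⟩
      refine ext_inner_right ℝ fun x => ?_
      change inner ℝ (B (R.starProjection y)) x = inner ℝ (B y) x
      rw [hB, ContinuousLinearMap.adjoint_inner_left, ContinuousLinearMap.adjoint_inner_left,
        Submodule.inner_starProjection_left_eq_right,
        Submodule.starProjection_eq_self_iff.2 (show A x ∈ R from ⟨x, rfl⟩)]
    set V : Submodule ℝ H := R ⊔ R.map (B : H →ₗ[ℝ] H) with hV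
    have hVfin : FiniteDimensional ℝ V := by rw [hV]; infer_instance
    have hVW : ∀ v ∈ V, v ∈ Wplus i := by
      intro v hv
      obtain ⟨a, ⟨u, rfl⟩, b, ⟨c, -, rfl⟩, rfl⟩ := Submodule.mem_sup.1 hv
      obtain ⟨φ, hφ⟩ := hW ⟨u, rfl⟩
      refine ⟨φ + (innerSL ℝ c) ∘L Abar, fun k => ?_⟩
      change φ (i k) + inner ℝ c (Abar (i k)) = inner ℝ k (A u + B c)
      rw [hφ, hAbar, inner_add_right, hB, ContinuousLinearMap.adjoint_inner_right,
        real_inner_comm c]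
    have hPA : ∀ x, V.starProjection (A x) = A x := fun x =>
      Submodule.starProjection_eq_self_iff.2 (Submodule.mem_sup_left ⟨x, rfl⟩)
    have hPB : ∀ x, V.starProjection (B x) = B x := fun x =>
      Submodule.starProjection_eq_self_iff.2 (Submodule.mem_sup_right (hBrange x))
    refine ⟨V.starProjection, fun x y => Submodule.inner_starProjection_left_eq_right V x y,
      ?_, ?_, ?_, ?_, ?_⟩
    · ext x
      exact Submodule.starProjection_eq_self_iff.2 (Submodule.starProjection_apply_mem V x)
    · refine Submodule.finiteDimensional_of_le (S₂ := V) ?_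
      rintro _ ⟨x, rfl⟩
      exact Submodule.starProjection_apply_mem V x
    · rintro _ ⟨x, rfl⟩
      exact hVW _ (Submodule.starProjection_apply_mem V x)
    · let e := stdOrthonormalBasis ℝ V
      choose φ hφ using fun j => hVW (e j : H) (e j).2
      refine ⟨∑ j, (φ j).smulRight (e j : H), fun h => ?_⟩
      rw [Submodule.starProjection_apply, e.orthogonalProjectionOnto_apply_eq_sum]
      simp [hφ, real_inner_comm]
    · ext x
      change A x = V.starProjection (A (V.starProjection x))
      rw [hPA]
      refine ext_inner_right ℝ fun y => ?_
      rw [← ContinuousLinearMap.adjoint_inner_right, ← ContinuousLinearMap.adjoint_inner_right,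
        Submodule.inner_starProjection_left_eq_right, ← hB, hPB]
  · rintro ⟨P, -, -, hfin, hW, ⟨Pbar, hPbar⟩, hAP⟩
    have hx : ∀ x, A x = P (A (P x)) := fun x => congrArg (fun T : H →L[ℝ] H => T x) hAP
    refine ⟨hA, ?_, ?_, P ∘L A ∘L Pbar, fun h => ?_⟩
    · refine Submodule.finiteDimensional_of_le (S₂ := LinearMap.range (P : H →ₗ[ℝ] H)) ?_
      rintro _ ⟨x, rfl⟩
      exact ⟨A (P x), (hx x).symm⟩
    · rintro _ ⟨x, rfl⟩
      rw [hx]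
      exact hW ⟨_, rfl⟩
    · change P (A (Pbar (i h))) = A h
      rw [hPbar, ← hx]

end
end

section
/- Let H be a real Hilbert space, let A : H → H be a skew-adjoint Hilbert–Schmidt operator (A* = −A), and let P be the orthogonal projection onto the orthogonal complement of a one-dimensional subspace of H (i.e. onto {h₀}^⊥ for some unit vector h₀). Then ‖P ∘ A‖_op = ‖A ∘ P‖_op = ‖A‖_op, where ‖·‖_op denotes the operator norm. -/
open scoped ENNReal

noncomputable section

/-- If `A` is a skew-adjoint Hilbert–Schmidt operator on a real Hilbert space `H` and
`P` is the orthogonal projection onto the orthogonal complement of the line spanned by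
a unit vector `h₀`, then `‖P ∘ A‖_op = ‖A ∘ P‖_op = ‖A‖_op`. -/
theorem opNorm_proj_comp_skewAdjoint
    {H : Type*} [NormedAddCommGroup H] [InnerProductSpace ℝ H] [CompleteSpace H]
    [TopologicalSpace.SeparableSpace H]
    {ι : Type} (b : HilbertBasis ι ℝ H)
    (A : H →L[ℝ] H) (hHS : hsNormSq b A < ∞)
    (hskew : ∀ x y : H, (inner ℝ (A x) y : ℝ) = -(inner ℝ x (A y) : ℝ))
    (h₀ : H) (hh₀ : ‖h₀‖ = 1)
    (P : H →L[ℝ] H) (hP : ∀ x : H, P x = x - (inner ℝ x h₀ : ℝ) • h₀) :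
    ‖P ∘L A‖ = ‖A‖ ∧ ‖A ∘L P‖ = ‖A‖ := by
  have hPnorm : ‖P‖ ≤ 1 := by
    refine ContinuousLinearMap.opNorm_le_bound _ zero_le_one fun x => ?_
    rw [one_mul]
    have h1 : ‖P x‖ ^ 2 = ‖x‖ ^ 2 - (inner ℝ x h₀ : ℝ) ^ 2 := by
      rw [hP, norm_sub_sq_real, inner_smul_right, norm_smul, hh₀, mul_one, Real.norm_eq_abs, sq_abs]
      ring
    refine (sq_le_sq₀ (norm_nonneg _) (norm_nonneg _)).1 ?_
    nlinarith [sq_nonneg (inner ℝ x h₀ : ℝ)]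
  have hAadj : ContinuousLinearMap.adjoint A = -A := by
    symm
    rw [ContinuousLinearMap.eq_adjoint_iff]
    intro x y
    rw [neg_apply, inner_neg_left, hskew, neg_neg]
  have hPadj : ContinuousLinearMap.adjoint P = P := by
    symm
    rw [ContinuousLinearMap.eq_adjoint_iff]
    intro x y
    rw [hP, hP, inner_sub_left, inner_sub_right, inner_smul_left, inner_smul_right,
      real_inner_comm y h₀]
    simp
    ring
  have hPA : ‖P ∘L A‖ = ‖A ∘L P‖ := by
    rw [← LinearIsometryEquiv.norm_map ContinuousLinearMap.adjoint (P ∘L A),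
      ContinuousLinearMap.adjoint_comp, hAadj, hPadj, ContinuousLinearMap.neg_comp, norm_neg]
  have hle : ‖A ∘L P‖ ≤ ‖A‖ := by
    refine (ContinuousLinearMap.opNorm_comp_le _ _).trans ?_
    exact mul_le_of_le_one_right (norm_nonneg _) hPnorm
  have hge : ‖A‖ ≤ ‖A ∘L P‖ := by
    by_contra hlt
    push Not at hlt
    obtain ⟨M, hM⟩ : ∃ M, M = ‖A‖ := ⟨_, rfl⟩
    obtain ⟨c, hc⟩ : ∃ c, c = ‖A ∘L P‖ := ⟨_, rfl⟩
    rw [← hM, ← hc] at hlt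
    have hc0 : 0 ≤ c := hc ▸ norm_nonneg _
    have hM0 : 0 ≤ M := hc0.trans hlt.le
    have hq : ∀ z, ‖A z‖ ^ 2 ≤ M ^ 2 * ‖z‖ ^ 2 := fun z => by
      rw [← mul_pow, hM]
      exact pow_le_pow_left₀ (norm_nonneg _) (A.le_opNorm z) 2
    have hqc : ∀ z, (inner ℝ z h₀ : ℝ) = 0 → ‖A z‖ ^ 2 ≤ c ^ 2 * ‖z‖ ^ 2 := fun z hz => by
      have h1 := (A ∘L P).le_opNorm z
      rw [ContinuousLinearMap.comp_apply, hP, hz, zero_smul, sub_zero] at h1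
      rw [← mul_pow, hc]
      exact pow_le_pow_left₀ (norm_nonneg _) h1 2
    have hcM : c ^ 2 < M ^ 2 := pow_lt_pow_left₀ hlt hc0 two_ne_zero
    have key : ∀ x, ‖x‖ = 1 → ‖A x‖ ^ 2 ≤ (M ^ 2 + c ^ 2) / 2 := by
      intro x hx
      have hxy : (inner ℝ x (A x) : ℝ) = 0 := by
        have h1 := hskew x x
        rw [real_inner_comm] at h1
        linarith
      have hts : ‖A x‖ ^ 2 ≤ ‖A (A x)‖ := by
        have h1 := hskew x (A x)
        rw [real_inner_self_eq_norm_sq] at h1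
        have h2 := abs_real_inner_le_norm x (A (A x))
        rw [hx, one_mul] at h2
        have h3 := neg_abs_le (inner ℝ x (A (A x)) : ℝ)
        linarith
      have hts2 : (‖A x‖ ^ 2) ^ 2 ≤ ‖A (A x)‖ ^ 2 := pow_le_pow_left₀ (sq_nonneg _) hts 2
      obtain ⟨a, ha⟩ : ∃ a, a = (inner ℝ (A x) h₀ : ℝ) := ⟨_, rfl⟩
      obtain ⟨b', hb⟩ : ∃ b', b' = -(inner ℝ x h₀ : ℝ) := ⟨_, rfl⟩
      have hz : (inner ℝ (a • x + b' • A x) h₀ : ℝ) = 0 := by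
        rw [inner_add_left, real_inner_smul_left, real_inner_smul_left, ← ha, hb]
        ring
      have h1 := hqc _ hz
      have h2 := hq (a • x - b' • A x)
      have h3 := parallelogram_law_with_norm ℝ (A (a • x)) (A (b' • A x))
      have h4 : ‖a • x + b' • A x‖ ^ 2 = a ^ 2 + b' ^ 2 * ‖A x‖ ^ 2 := by
        rw [norm_add_sq_real, real_inner_smul_left, real_inner_smul_right, hxy, norm_smul,
          norm_smul, hx, mul_pow, mul_pow, Real.norm_eq_abs, Real.norm_eq_abs, sq_abs, sq_abs]
        ring
      have h5 : ‖a • x - b' • A x‖ ^ 2 = a ^ 2 + b' ^ 2 * ‖A x‖ ^ 2 := by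
        rw [norm_sub_sq_real, real_inner_smul_left, real_inner_smul_right, hxy, norm_smul,
          norm_smul, hx, mul_pow, mul_pow, Real.norm_eq_abs, Real.norm_eq_abs, sq_abs, sq_abs]
        ring
      have h6 : ‖A (a • x)‖ ^ 2 = a ^ 2 * ‖A x‖ ^ 2 := by
        rw [map_smul, norm_smul, mul_pow, Real.norm_eq_abs, sq_abs]
      have h7 : ‖A (b' • A x)‖ ^ 2 = b' ^ 2 * ‖A (A x)‖ ^ 2 := by
        rw [map_smul, norm_smul, mul_pow, Real.norm_eq_abs, sq_abs]
      rw [← map_add, ← map_sub, h6, h7] at h3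
      rw [h4] at h1
      rw [h5] at h2
      have hxc : b' = 0 → ‖A x‖ ^ 2 ≤ c ^ 2 := fun h => by
        have := hqc x (by linarith)
        rwa [hx, one_pow, mul_one] at this
      generalize ‖A x‖ ^ 2 = t at *
      generalize ‖A (A x)‖ ^ 2 = s at *
      by_contra hcon
      push Not at hcon
      have ht : 0 < t := by nlinarith [sq_nonneg c]
      have h8 : b' ^ 2 * t ^ 2 ≤ b' ^ 2 * s := mul_le_mul_of_nonneg_left hts2 (sq_nonneg _)
      have hb0 : b' ≠ 0 := fun h => by
        have := hxc h
        linarith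
      have h9 : 0 < a ^ 2 + b' ^ 2 * t := by positivity
      have h10 : 2 * t * (a ^ 2 + b' ^ 2 * t) ≤ (M ^ 2 + c ^ 2) * (a ^ 2 + b' ^ 2 * t) := by
        nlinarith
      have := le_of_mul_le_mul_right h10 h9
      linarith
    have hfin : ‖A‖ ≤ √((M ^ 2 + c ^ 2) / 2) :=
      ContinuousLinearMap.opNorm_le_of_unit_norm (Real.sqrt_nonneg _)
        fun x hx => Real.le_sqrt_of_sq_le (key x hx)
    rw [← hM, Real.le_sqrt hM0 (by positivity)] at hfin
    linarith
  exact ⟨hPA.trans (le_antisymm hle hge), le_antisymm hle hge⟩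

end
end

section
/- Let H be a real Hilbert space and let A : H → H be a nonzero skew-adjoint Hilbert–Schmidt operator (A* = −A). Then there exists a unit vector u ∈ H such that A² u = −‖A‖_op² · u; in particular ‖A u‖ = ‖A‖_op and ⟨A u, u⟩ = 0. -/
open scoped ENNReal

noncomputable section

theorem hs_sum_bound {H : Type*} [NormedAddCommGroup H] [InnerProductSpace ℝ H]
    {ι : Type*} (b : HilbertBasis ι ℝ H) (A : H →L[ℝ] H) (t : Finset ι) :
    ‖∑ i ∈ t, (innerSL ℝ (b i)).smulRight (A (b i))‖ ≤ √(∑ i ∈ t, ‖A (b i)‖ ^ 2) := by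
  refine ContinuousLinearMap.opNorm_le_bound _ (Real.sqrt_nonneg _) fun x => ?_
  have h1 : ‖(∑ i ∈ t, (innerSL ℝ (b i)).smulRight (A (b i))) x‖
      ≤ ∑ i ∈ t, ‖A (b i)‖ * ‖(inner ℝ (b i) x : ℝ)‖ := by
    rw [ContinuousLinearMap.sum_apply]
    refine (norm_sum_le _ _).trans (Finset.sum_le_sum fun i _ => ?_)
    simp [norm_smul, mul_comm]
  refine h1.trans ((Real.sum_mul_le_sqrt_mul_sqrt _ _ _).trans ?_)
  refine mul_le_mul_of_nonneg_left ?_ (Real.sqrt_nonneg _)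
  exact Real.sqrt_le_iff.2 ⟨norm_nonneg _, b.orthonormal.sum_inner_products_le x⟩

theorem hs_isCompact {H : Type*} [NormedAddCommGroup H] [InnerProductSpace ℝ H]
    [CompleteSpace H] {ι : Type*} (b : HilbertBasis ι ℝ H) (A : H →L[ℝ] H)
    (hHS : hsNormSq b A < ∞) : IsCompactOperator A := by
  have hs : Summable fun i => ‖A (b i)‖ ^ 2 := by
    have h : ∑' i, ((‖A (b i)‖₊ ^ 2 : NNReal) : ℝ≥0∞) ≠ ∞ := by
      have := hHS.ne
      simpa [hsNormSq] using this
    have h2 := ENNReal.tsum_coe_ne_top_iff_summable.1 h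
    simpa using NNReal.summable_coe.2 h2
  have hS : Summable fun i => (innerSL ℝ (b i)).smulRight (A (b i)) := by
    rw [summable_iff_vanishing_norm] at hs ⊢
    intro ε hε
    obtain ⟨s, hs⟩ := hs (ε ^ 2) (by positivity)
    refine ⟨s, fun t ht => (hs_sum_bound b A t).trans_lt ?_⟩
    rw [Real.sqrt_lt' hε]
    exact (le_abs_self _).trans_lt (hs t ht)
  have hT : HasSum (fun i => (innerSL ℝ (b i)).smulRight (A (b i))) A := by
    convert hS.hasSum
    ext x
    have h1 := (b.hasSum_repr x).mapL A
    have h2 := hS.hasSum.mapL (ContinuousLinearMap.apply ℝ H x)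
    refine h1.unique ?_
    convert h2 using 1
    · ext i
      simp [b.repr_apply_apply]
    · rfl
  refine isCompactOperator_of_tendsto hT (Filter.Eventually.of_forall fun t => ?_)
  have : ∑ i ∈ t, (innerSL ℝ (b i)).smulRight (A (b i)) ∈ compactOperator (RingHom.id ℝ) H H := by
    refine sum_mem fun i _ => ?_
    exact (isCompactOperator_of_locallyCompactSpace_rng
      ((ContinuousLinearMap.id ℝ ℝ).smulRight (A (b i)))).comp_clm (innerSL ℝ (b i))
  exact this

/-- If `A` is a nonzero skew-adjoint Hilbert–Schmidt operator on a real Hilbert space,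
then there is a unit vector `u` with `A² u = −‖A‖_op² u`; in particular
`‖A u‖ = ‖A‖_op` and `⟨A u, u⟩ = 0`. -/
theorem exists_unit_eigenvector_of_skewAdjoint
    {H : Type*} [NormedAddCommGroup H] [InnerProductSpace ℝ H] [CompleteSpace H]
    [TopologicalSpace.SeparableSpace H]
    {ι : Type} (b : HilbertBasis ι ℝ H)
    (A : H →L[ℝ] H) (hHS : hsNormSq b A < ∞)
    (hskew : ∀ x y : H, (inner ℝ (A x) y : ℝ) = -(inner ℝ x (A y) : ℝ))
    (hA : A ≠ 0) :
    ∃ u : H, ‖u‖ = 1 ∧ A (A u) = -(‖A‖ ^ 2) • u ∧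
      ‖A u‖ = ‖A‖ ∧ (inner ℝ (A u) u : ℝ) = 0 := by
  have hm : 0 < ‖A‖ := norm_pos_iff.2 hA
  have hK := hs_isCompact b A hHS
  have hx : ∀ n : ℕ, ∃ x : H, ‖x‖ < 1 ∧ ‖A‖ - 1 / ((n : ℝ) + 1) < ‖A x‖ := fun n =>
    A.exists_lt_apply_of_lt_opNorm (by
      have : (0 : ℝ) < 1 / ((n : ℝ) + 1) := by positivity
      linarith)
  choose x hx1 hx2 using hx
  have hAle : ∀ z : H, ‖z‖ ≤ 1 → ‖A z‖ ≤ ‖A‖ := fun z hz => A.unit_le_opNorm z hz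
  have hlim : Filter.Tendsto (fun n => ‖A (x n)‖) Filter.atTop (nhds ‖A‖) := by
    refine tendsto_of_tendsto_of_tendsto_of_le_of_le ?_ tendsto_const_nhds
      (fun n => (hx2 n).le) (fun n => hAle _ (hx1 n).le)
    simpa using tendsto_const_nhds.sub (tendsto_one_div_add_atTop_nhds_zero_nat (𝕜 := ℝ))
  obtain ⟨K, hKc, hKs⟩ := hK.image_closedBall_subset_compact (f := A.toLinearMap) 1
  obtain ⟨y, -, φ, hφ, hy⟩ := hKc.tendsto_subseq (x := fun n => A (x n)) fun n =>
    hKs ⟨x n, by simpa using (hx1 n).le, rfl⟩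
  have key : ∀ z : H, ‖z‖ ≤ 1 →
      ‖A (A z) + ‖A‖ ^ 2 • z‖ ^ 2 ≤ 2 * ‖A‖ ^ 2 * (‖A‖ ^ 2 - ‖A z‖ ^ 2) := by
    intro z hz
    have h1 : ‖A (A z)‖ ≤ ‖A‖ * ‖A‖ :=
      (A.le_opNorm _).trans (mul_le_mul_of_nonneg_left (hAle z hz) hm.le)
    have h2 : ‖A (A z)‖ ^ 2 ≤ (‖A‖ * ‖A‖) ^ 2 := pow_le_pow_left₀ (norm_nonneg _) h1 2
    have h3 : ‖z‖ ^ 2 ≤ 1 := pow_le_one₀ (norm_nonneg _) hz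
    rw [norm_add_sq_real, inner_smul_right, hskew, real_inner_self_eq_norm_sq, norm_smul,
      Real.norm_of_nonneg (by positivity), mul_pow]
    nlinarith [mul_le_mul_of_nonneg_left h3 (by positivity : 0 ≤ (‖A‖ ^ 2) ^ 2)]
  have h0 : Filter.Tendsto (fun n => A (A (x n)) + ‖A‖ ^ 2 • x n) Filter.atTop (nhds 0) := by
    rw [tendsto_zero_iff_norm_tendsto_zero]
    have h1 : Filter.Tendsto (fun n => ‖A (A (x n)) + ‖A‖ ^ 2 • x n‖ ^ 2) Filter.atTop
        (nhds 0) := by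
      refine squeeze_zero (fun n => by positivity) (fun n => key _ (hx1 n).le) ?_
      have := ((hlim.pow 2).const_sub (‖A‖ ^ 2)).const_mul (2 * ‖A‖ ^ 2)
      simpa using this
    simpa using h1.sqrt
  have hAy : Filter.Tendsto (fun n => A (A (x (φ n)))) Filter.atTop (nhds (A y)) :=
    (A.continuous.tendsto y).comp hy
  obtain ⟨u, hu⟩ : ∃ u, Filter.Tendsto (fun n => x (φ n)) Filter.atTop (nhds u) := by
    have h1 := ((h0.comp hφ.tendsto_atTop).sub hAy).const_smul ((‖A‖ ^ 2)⁻¹)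
    refine ⟨_, h1.congr fun n => ?_⟩
    simp only [Function.comp, add_sub_cancel_left]
    rw [inv_smul_smul₀ (by positivity)]
  have hAu : ‖A u‖ = ‖A‖ :=
    tendsto_nhds_unique ((A.continuous.tendsto u).comp hu).norm (hlim.comp hφ.tendsto_atTop)
  have hule : ‖u‖ ≤ 1 := le_of_tendsto' hu.norm fun n => (hx1 _).le
  have hu1 : ‖u‖ = 1 := by
    refine le_antisymm hule ?_
    have := A.le_opNorm u
    rw [hAu] at this
    exact (le_mul_iff_one_le_right hm).1 this
  refine ⟨u, hu1, ?_, hAu, ?_⟩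
  · have h := key u hule
    rw [hAu, sub_self, mul_zero] at h
    have h2 : ‖A (A u) + ‖A‖ ^ 2 • u‖ = 0 := by
      nlinarith [norm_nonneg (A (A u) + ‖A‖ ^ 2 • u)]
    rw [neg_smul]
    exact eq_neg_of_add_eq_zero_left (norm_eq_zero.1 h2)
  · have h := hskew u u
    rw [real_inner_comm u (A u)] at h
    have h3 := real_inner_comm u (A u)
    linarith

end
end

section
/- Assume ω is non-degenerate in the sense that Ω_λ ≠ 0 for every λ ≠ 0, and fix T > 0. Then almost surely the random linear map ρ_T(B) is strictly positive definite: ℙ( for all λ ∈ ℝᵈ with λ ≠ 0, ⟨ρ_T(B)λ, λ⟩ > 0 ) = 1. In particular, ρ_T(B) is almost surely invertible. -/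
open MeasureTheory ProbabilityTheory Filter

/-- A standard Brownian motion with values in a real inner product space `E`
(covariance `(t−s)·Id`): `B 0 = 0`, a.s. continuous sample paths on `[0,∞)`,
independent increments, and for `0 ≤ s ≤ t` and every `u ∈ E` the real random
variable `⟨B t − B s, u⟩` is Gaussian with mean `0` and variance `(t−s)‖u‖²`. -/
structure IsStandardBM {E Ω : Type*} [NormedAddCommGroup E] [InnerProductSpace ℝ E]
    [MeasurableSpace E] [MeasurableSpace Ω] (P : Measure Ω)
    (B : ℝ → Ω → E) : Prop where
  init : ∀ ω, B 0 ω = 0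
  meas : ∀ t : ℝ, Measurable (B t)
  cont : ∀ᵐ ω ∂P, ContinuousOn (fun t => B t ω) (Set.Ici 0)
  indep : ∀ (n : ℕ) (t : Fin (n + 1) → ℝ), (∀ i, 0 ≤ t i) → Monotone t →
    iIndepFun
      (fun i : Fin n => fun ω => B (t i.succ) ω - B (t i.castSucc) ω) P
  gauss : ∀ s t : ℝ, 0 ≤ s → s ≤ t → ∀ u : E,
    Measure.map (fun ω => (inner ℝ (B t ω - B s ω) u : ℝ)) P =
      gaussianReal 0 ((t - s).toNNReal * ‖u‖₊ ^ 2)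

theorem bm_pi_li_null {E : Type*} [NormedAddCommGroup E] [InnerProductSpace ℝ E]
    [FiniteDimensional ℝ E] [MeasurableSpace E] [BorelSpace E] (k : ℕ)
    (hk : k ≤ Module.finrank ℝ E) (μ : Fin k → Measure E) [∀ i, IsProbabilityMeasure (μ i)]
    (hμ : ∀ i (W : Submodule ℝ E), W ≠ ⊤ → μ i W = 0) :
    ∀ᵐ x ∂(Measure.pi μ), LinearIndependent ℝ x := by
  induction k with
  | zero => exact Eventually.of_forall fun x => linearIndependent_empty_type
  | succ k ih =>
    have ih' := ih (by omega) (fun i => μ i.succ) (fun i => hμ i.succ)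
    have mp := measurePreserving_piFinSuccAbove (fun i : Fin (k+1) => μ i) 0
    have hmeas : MeasurableSet {q : E × (Fin k → E) |
        LinearIndependent ℝ (Fin.cons q.1 q.2 : Fin (k+1) → E)} := by
      have hc : Continuous (fun q : E × (Fin k → E) => (Fin.cons q.1 q.2 : Fin (k+1) → E)) := by
        refine continuous_pi fun i => ?_
        refine Fin.cases ?_ (fun j => ?_) i
        · simpa using continuous_fst
        · simp only [Fin.cons_succ]; fun_prop
      exact ((isOpen_setOf_linearIndependent (𝕜 := ℝ) (E := E) (ι := Fin (k+1))).preimage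
        hc).measurableSet
    have key : ∀ᵐ q ∂((μ 0).prod (Measure.pi fun i => μ (Fin.succ i))),
        LinearIndependent ℝ (Fin.cons q.1 q.2 : Fin (k+1) → E) := by
      have hs : ∀ᵐ q ∂((Measure.pi fun i => μ (Fin.succ i)).prod (μ 0)),
          LinearIndependent ℝ (Fin.cons q.2 q.1 : Fin (k+1) → E) := by
        have hm2 := measurable_swap hmeas
        refine (Measure.ae_prod_iff_ae_ae (p := fun q : (Fin k → E) × E =>
          LinearIndependent ℝ (Fin.cons q.2 q.1 : Fin (k+1) → E)) hm2).2 ?_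
        filter_upwards [ih'] with v hv
        have hW : Submodule.span ℝ (Set.range v) ≠ ⊤ := by
          intro h
          have h1 := finrank_range_le_card (R := ℝ) v
          rw [Set.finrank, h, finrank_top, Fintype.card_fin] at h1
          omega
        have h0 := hμ 0 _ hW
        have h1 := measure_eq_zero_iff_ae_notMem.1 h0
        filter_upwards [h1] with x hx
        exact linearIndependent_finCons.2 ⟨hv, hx⟩
      have := (Measure.measurePreserving_swap (μ := μ 0)
        (ν := Measure.pi fun i => μ (Fin.succ i))).quasiMeasurePreserving.ae hs
      exact this
    have h2 := mp.quasiMeasurePreserving.ae key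
    filter_upwards [h2] with x hx
    have : (Fin.cons (x 0) (fun j : Fin k => x j.succ) : Fin (k+1) → E) = x :=
      Fin.cons_self_tail x
    rw [← this]
    exact hx

theorem bm_subspace_null {E Ω : Type*} [NormedAddCommGroup E] [InnerProductSpace ℝ E]
    [FiniteDimensional ℝ E] [MeasurableSpace E] [BorelSpace E] [MeasurableSpace Ω]
    (P : Measure Ω) (X : Ω → E) (hX : Measurable X) (c : NNReal) (hc : c ≠ 0)
    (h : ∀ u : E, Measure.map (fun ω => (inner ℝ (X ω) u : ℝ)) P = gaussianReal 0 (c * ‖u‖₊ ^ 2))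
    (W : Submodule ℝ E) (hW : W ≠ ⊤) : Measure.map X P W = 0 := by
  have : Wᗮ ≠ ⊥ := fun h => hW (Submodule.orthogonal_eq_bot_iff.1 h)
  obtain ⟨u, hu, hu0⟩ := Submodule.exists_mem_ne_zero_of_ne_bot this
  rw [Measure.map_apply hX W.closed_of_finiteDimensional.measurableSet]
  have hm : Measurable (fun ω => (inner ℝ (X ω) u : ℝ)) := by fun_prop
  have h0 : Measure.map (fun ω => (inner ℝ (X ω) u : ℝ)) P {0} = 0 := by
    rw [h u]
    have := noAtoms_gaussianReal (μ := 0) (v := c * ‖u‖₊ ^ 2) (by simp [hc, hu0])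
    exact measure_singleton 0
  rw [Measure.map_apply hm (measurableSet_singleton 0)] at h0
  refine measure_mono_null ?_ h0
  intro ω hω
  exact (Submodule.mem_orthogonal _ _).1 hu _ hω

/-- Almost sure strict positive definiteness of `ρ_T(B)`: assuming `ω` is
non-degenerate (`Ω_λ ≠ 0` for `λ ≠ 0`) and `T > 0`, almost surely
`⟨ρ_T(B)λ, λ⟩ > 0` for all `λ ≠ 0`. -/
theorem rho_ae_posDef (N d : ℕ) (hN : 1 ≤ N) (hd : 1 ≤ d)
    (w : EuclideanSpace ℝ (Fin N) →ₗ[ℝ] EuclideanSpace ℝ (Fin N) →ₗ[ℝ]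
      EuclideanSpace ℝ (Fin d))
    (hskew : ∀ h k : EuclideanSpace ℝ (Fin N), w h k = -w k h)
    (Om : EuclideanSpace ℝ (Fin d) →
      (EuclideanSpace ℝ (Fin N) →L[ℝ] EuclideanSpace ℝ (Fin N)))
    (hOm : ∀ (lam : EuclideanSpace ℝ (Fin d)) (h k : EuclideanSpace ℝ (Fin N)),
      (inner ℝ (Om lam h) k : ℝ) = (inner ℝ (w h k) lam : ℝ))
    (hnd : ∀ lam : EuclideanSpace ℝ (Fin d), lam ≠ 0 → Om lam ≠ 0)
    (T : ℝ) (hT : 0 < T)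
    {Ω : Type*} [MeasurableSpace Ω] (P : Measure Ω) [IsProbabilityMeasure P]
    (B : ℝ → Ω → EuclideanSpace ℝ (Fin N)) (hB : IsStandardBM P B)
    (rho : Ω → (EuclideanSpace ℝ (Fin d) →L[ℝ] EuclideanSpace ℝ (Fin d)))
    (hrho : ∀ (ω : Ω) (lam lam' : EuclideanSpace ℝ (Fin d)),
      (inner ℝ (rho ω lam) lam' : ℝ) =
        (1 / 4) * ∫ s in (0:ℝ)..T, (inner ℝ (Om lam (B s ω)) (Om lam' (B s ω)) : ℝ)) :
    P {ω | ∀ lam : EuclideanSpace ℝ (Fin d), lam ≠ 0 →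
      0 < (inner ℝ (rho ω lam) lam : ℝ)} = 1 := by

  have hN0 : (0:ℝ) < N := by exact_mod_cast hN
  let t : Fin (N+1) → ℝ := fun i => T * (i : ℕ) / N
  have ht0 : ∀ i, 0 ≤ t i := fun i => by positivity
  have htm : Monotone t := fun i j hij => by
    have : ((i:ℕ):ℝ) ≤ (j:ℕ) := by exact_mod_cast hij
    simp only [t]; gcongr
  have htT : ∀ i, t i ≤ T := fun i => by
    have : ((i:ℕ):ℝ) ≤ N := by exact_mod_cast Nat.lt_succ_iff.1 i.2
    simp only [t]; rw [div_le_iff₀ hN0]; gcongr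
  let X : Fin N → Ω → EuclideanSpace ℝ (Fin N) := fun i ω => B (t i.succ) ω - B (t i.castSucc) ω
  have hXm : ∀ i, Measurable (X i) := fun i => (hB.meas _).sub (hB.meas _)
  have hind : iIndepFun X P := hB.indep N t ht0 htm
  have hpi := (iIndepFun_iff_map_fun_eq_pi_map (fun i => (hXm i).aemeasurable)).1 hind
  have hprob : ∀ i, IsProbabilityMeasure (Measure.map (X i) P) := fun i =>
    Measure.isProbabilityMeasure_map (hXm i).aemeasurable
  have hLI := bm_pi_li_null N (by simp) (fun i => Measure.map (X i) P) (by
    intro i W hW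
    refine bm_subspace_null P (X i) (hXm i) (t i.succ - t i.castSucc).toNNReal ?_
      (hB.gauss _ _ (ht0 _) (htm (Fin.castSucc_lt_succ).le)) W hW
    have : 0 < t i.succ - t i.castSucc := by
      have : t i.succ - t i.castSucc = T / N := by
        simp only [t, Fin.val_succ, Fin.val_castSucc]; push_cast; ring
      rw [this]; positivity
    simpa using this)
  rw [← hpi] at hLI
  have hLI' := ae_of_ae_map (measurable_pi_lambda _ hXm).aemeasurable hLI
  have hae : ∀ᵐ ω ∂P, ω ∈ {ω | ∀ lam : EuclideanSpace ℝ (Fin d), lam ≠ 0 →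
      0 < (inner ℝ (rho ω lam) lam : ℝ)} := by
    filter_upwards [hLI', hB.cont] with ω hω hcont lam hlam
    rw [hrho]
    refine mul_pos (by norm_num) ?_
    have hspan := hω.span_eq_top_of_card_eq_finrank' (by simp)
    have hex : ∃ c ∈ Set.Icc 0 T, Om lam (B c ω) ≠ 0 := by
      by_contra! hcon
      apply hnd lam hlam
      have : (Om lam : EuclideanSpace ℝ (Fin N) →ₗ[ℝ] EuclideanSpace ℝ (Fin N)) = 0 := by
        refine LinearMap.ext_on_range hspan ?_
        intro i
        simp [X, hcon (t i.succ) ⟨ht0 _, htT _⟩, hcon (t i.castSucc) ⟨ht0 _, htT _⟩]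
      ext1 x
      exact LinearMap.congr_fun this x
    have hc : ContinuousOn (fun s => B s ω) (Set.Icc 0 T) :=
      hcont.mono fun x hx => hx.1
    have hc2 : ContinuousOn (fun s => Om lam (B s ω)) (Set.Icc 0 T) :=
      (Om lam).continuous.comp_continuousOn hc
    refine intervalIntegral.integral_pos hT (hc2.inner hc2)
      (fun x _ => real_inner_self_nonneg) ?_
    obtain ⟨c, hc, hne⟩ := hex
    exact ⟨c, hc, real_inner_self_pos.2 hne⟩
  exact (measure_congr (eventuallyEq_univ.2 hae)).trans measure_univ
end

section
/- Let A be a real N×N skew-symmetric matrix (Aᵀ = −A), let Σ be the positive semidefinite square root of AᵀA = −A², and let Φ(x) = exp(−(1/2)⟨Σx, x⟩). Then for every twice continuously differentiable function g : ℝᴺ → ℝ and every x ∈ ℝᴺ, (1/2)Δ(Φg)(x) − (1/2)‖Ax‖²(Φg)(x) = Φ(x)·( (1/2)Δg(x) − ⟨Σx, ∇g(x)⟩ − (1/2)tr(Σ)·g(x) ). -/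
noncomputable section

/-- The Laplacian of `f : ℝᴺ → ℝ` at `x`: the trace of the second derivative,
`Δf(x) = ∑ i, D²f(x)(eᵢ, eᵢ)` with `(eᵢ)` the standard orthonormal basis. -/
def lap {N : ℕ} (f : EuclideanSpace ℝ (Fin N) → ℝ) (x : EuclideanSpace ℝ (Fin N)) : ℝ :=
  ∑ i : Fin N, fderiv ℝ (fderiv ℝ f) x (EuclideanSpace.single i (1 : ℝ))
    (EuclideanSpace.single i (1 : ℝ))

/-- Ground state transform: with `A` skew-symmetric, `Σ` the positive semidefinite
square root of `AᵀA = −A²` and `Φ(x) = exp(−(1/2)⟨Σx,x⟩)`, for every `C²` function `g`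
and every `x`:
`(1/2)Δ(Φg)(x) − (1/2)‖Ax‖²(Φg)(x) = Φ(x)·((1/2)Δg(x) − ⟨Σx, ∇g(x)⟩ − (1/2)(tr Σ)g(x))`. -/
theorem ground_state_transform (N : ℕ) (A S : Matrix (Fin N) (Fin N) ℝ)
    (hA : A.transpose = -A) (hS : S.PosSemidef) (hS2 : S * S = A.transpose * A)
    (Φ : EuclideanSpace ℝ (Fin N) → ℝ)
    (hΦ : ∀ x, Φ x = Real.exp (-(1 / 2) * (inner ℝ (Matrix.toEuclideanLin S x) x : ℝ)))
    (g : EuclideanSpace ℝ (Fin N) → ℝ) (hg : ContDiff ℝ 2 g)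
    (x : EuclideanSpace ℝ (Fin N)) :
    (1 / 2) * lap (fun y => Φ y * g y) x
        - (1 / 2) * ‖Matrix.toEuclideanLin A x‖ ^ 2 * (Φ x * g x) =
      Φ x * ((1 / 2) * lap g x
        - (inner ℝ (Matrix.toEuclideanLin S x) (gradient g x) : ℝ)
        - (1 / 2) * Matrix.trace S * g x) := by
  set T : EuclideanSpace ℝ (Fin N) →L[ℝ] EuclideanSpace ℝ (Fin N) :=
    LinearMap.toContinuousLinearMap (Matrix.toEuclideanLin S) with hT
  have hTa : ∀ y, Matrix.toEuclideanLin S y = T y := fun y => rfl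
  have hsymm : ∀ y z, inner ℝ (T y) z = (inner ℝ y (T z) : ℝ) := by
    have h := (Matrix.isSymmetric_toEuclideanLin_iff).2 hS.isHermitian
    exact fun y z => h y z
  let L : EuclideanSpace ℝ (Fin N) →L[ℝ] (EuclideanSpace ℝ (Fin N) →L[ℝ] ℝ) :=
    (innerSL ℝ).comp T
  have hL : ∀ y z, L y z = inner ℝ (T y) z := fun y z => rfl
  have hΦd : ∀ y, HasFDerivAt Φ (-(Φ y) • L y) y := by
    intro y
    have h1 : HasFDerivAt (fun y => Real.exp (-(1 / 2) * (inner ℝ (T y) y : ℝ))) _ y :=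
      (((T.hasFDerivAt (x := y)).inner ℝ (hasFDerivAt_id y)).const_mul (-(1 / 2))).exp
    have h2 : Φ = fun y => Real.exp (-(1 / 2) * (inner ℝ (T y) y : ℝ)) := funext hΦ
    rw [h2]
    refine h1.congr_fderiv ?_
    ext z
    have e1 : (inner ℝ (T z) y : ℝ) = inner ℝ (T y) z := by
      rw [hsymm, real_inner_comm]
    simp [hL, e1]
    ring
  have hgd : ∀ y, HasFDerivAt g (fderiv ℝ g y) y := fun y =>
    (hg.differentiable (by norm_num) y).hasFDerivAt
  have hg2 : HasFDerivAt (fderiv ℝ g) (fderiv ℝ (fderiv ℝ g) x) x :=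
    ((hg.fderiv_right (m := 1) (by norm_num)).differentiable (by norm_num) x).hasFDerivAt
  have hf1 : fderiv ℝ (fun y => Φ y * g y) = fun y => Φ y • (fderiv ℝ g y - g y • L y) := by
    funext y
    refine (((hΦd y).mul (hgd y)).fderiv : _).trans ?_
    ext z
    simp
    ring
  have hf2 := (hΦd x).smul (hg2.sub ((hgd x).smul (L.hasFDerivAt (x := x))))
  have key : ∀ e, fderiv ℝ (fderiv ℝ (fun y => Φ y * g y)) x e e =
      Φ x * (fderiv ℝ (fderiv ℝ g) x e e - 2 * (fderiv ℝ g x e * L x e)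
        - g x * L e e + g x * (L x e) ^ 2) := by
    intro e
    rw [hf1]
    erw [hf2.fderiv]
    simp
    ring
  have hLe : ∀ y i, L y (EuclideanSpace.single i (1 : ℝ)) = T y i := by
    intro y i
    rw [hL]
    simp [EuclideanSpace.inner_single_right]
  have htr : ∑ i, L (EuclideanSpace.single i (1 : ℝ)) (EuclideanSpace.single i (1 : ℝ))
      = Matrix.trace S := by
    unfold Matrix.trace
    refine Finset.sum_congr rfl fun i _ => ?_
    rw [hLe, ← hTa]
    simp [Matrix.toLpLin_apply]
  have hnorm : ‖Matrix.toEuclideanLin A x‖ ^ 2 = ∑ i, (T x i) ^ 2 := by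
    have h1 : ∀ M : Matrix (Fin N) (Fin N) ℝ, ‖Matrix.toEuclideanLin M x‖ ^ 2
        = x.ofLp ⬝ᵥ ((M.transpose * M).mulVec x.ofLp) := by
      intro M
      rw [← Matrix.mulVec_mulVec, Matrix.dotProduct_mulVec, Matrix.vecMul_transpose,
        EuclideanSpace.real_norm_sq_eq]
      simp [Matrix.toLpLin_apply, dotProduct, sq]
    have h2 : S.transpose = S := by simpa using hS.isHermitian.eq
    rw [h1, ← hS2]
    have h3 := h1 S
    rw [h2] at h3
    rw [← h3, hTa, EuclideanSpace.real_norm_sq_eq]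
  have hgrad : (inner ℝ (T x) (gradient g x) : ℝ)
      = ∑ i, fderiv ℝ g x (EuclideanSpace.single i (1 : ℝ)) * T x i := by
    rw [real_inner_comm, gradient, InnerProductSpace.toDual_symm_apply]
    conv_lhs => rw [← (EuclideanSpace.basisFun (Fin N) ℝ).sum_repr (T x)]
    simp [mul_comm]
  rw [hTa, hgrad, hnorm, ← htr]
  unfold lap
  simp only [key, hLe, ← Finset.mul_sum, Finset.sum_add_distrib, Finset.sum_sub_distrib]
  ring

end
end

section
/- Let A be a real N×N skew-symmetric matrix (Aᵀ = −A). For f : ℝᴺ → ℝ define (Sf)(x) = ⟨Ax, ∇f(x)⟩ and (Lf)(x) = (1/2)Δf(x) − (1/2)‖Ax‖²·f(x). Then the operators S and L commute on smooth functions: for every infinitely differentiable f : ℝᴺ → ℝ and every x ∈ ℝᴺ, S(Lf)(x) = L(Sf)(x). -/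
noncomputable section

section helpers
variable {E : Type*} [NormedAddCommGroup E] [NormedSpace ℝ E]

lemma contDiff_fderiv_top {F : Type*} [NormedAddCommGroup F] [NormedSpace ℝ F]
    {f : E → F} (hf : ContDiff ℝ (⊤ : ℕ∞) f) : ContDiff ℝ (⊤ : ℕ∞) (fderiv ℝ f) :=
  hf.fderiv_right (by norm_cast)

lemma diff_of_top {F : Type*} [NormedAddCommGroup F] [NormedSpace ℝ F]
    {f : E → F} (hf : ContDiff ℝ (⊤ : ℕ∞) f) : Differentiable ℝ f :=
  hf.differentiable (by simp)

lemma symm2 {F : Type*} [NormedAddCommGroup F] [NormedSpace ℝ F]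
    {f : E → F} (hf : ContDiff ℝ (⊤ : ℕ∞) f) (x u v : E) :
    fderiv ℝ (fderiv ℝ f) x u v = fderiv ℝ (fderiv ℝ f) x v u := by
  have h : IsSymmSndFDerivAt ℝ f x :=
    hf.contDiffAt.isSymmSndFDerivAt (by simp [minSmoothness_of_isRCLikeNormedField]; norm_cast)
  exact h u v

lemma fderiv_S {f : E → ℝ} (hf : ContDiff ℝ (⊤ : ℕ∞) f) (T : E →L[ℝ] E) (x v : E) :
    fderiv ℝ (fun y => fderiv ℝ f y (T y)) x v
      = fderiv ℝ (fderiv ℝ f) x v (T x) + fderiv ℝ f x (T v) := by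
  have h1 := (diff_of_top (contDiff_fderiv_top hf) x).hasFDerivAt
  have := (h1.clm_apply (T.hasFDerivAt (x := x))).fderiv
  rw [this]; simp [add_comm]

lemma fderiv_apply_const {F : Type*} [NormedAddCommGroup F] [NormedSpace ℝ F]
    {g : E → E →L[ℝ] F} (hg : Differentiable ℝ g) (x v w : E) :
    fderiv ℝ (fun y => g y w) x v = fderiv ℝ g x v w := by
  have := ((hg x).hasFDerivAt.clm_apply (hasFDerivAt_const w x)).fderiv
  rw [this]; simp

lemma fderiv2_S {f : E → ℝ} (hf : ContDiff ℝ (⊤ : ℕ∞) f) (T : E →L[ℝ] E) (x v w : E) :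
    fderiv ℝ (fderiv ℝ (fun y => fderiv ℝ f y (T y))) x v w
      = fderiv ℝ (fderiv ℝ (fderiv ℝ f)) x v w (T x) + fderiv ℝ (fderiv ℝ f) x w (T v)
        + fderiv ℝ (fderiv ℝ f) x v (T w) := by
  have hD := contDiff_fderiv_top hf
  have hD2 := contDiff_fderiv_top hD
  have hS : ContDiff ℝ (⊤ : ℕ∞) (fun y => fderiv ℝ f y (T y)) := hD.clm_apply T.contDiff
  rw [← fderiv_apply_const (diff_of_top (contDiff_fderiv_top hS))]
  simp_rw [fderiv_S hf]
  have h1 := ((diff_of_top hD2 x).hasFDerivAt.clm_apply (hasFDerivAt_const w x)).clm_apply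
    (T.hasFDerivAt (x := x))
  have h2 := (diff_of_top hD x).hasFDerivAt.clm_apply (hasFDerivAt_const (T w) x)
  rw [(h1.fun_add h2).fderiv]
  simp [add_comm]

lemma symm3 {f : E → ℝ} (hf : ContDiff ℝ (⊤ : ℕ∞) f) (x u v : E) :
    fderiv ℝ (fderiv ℝ (fderiv ℝ f)) x u v v = fderiv ℝ (fderiv ℝ (fderiv ℝ f)) x v v u := by
  have hD := contDiff_fderiv_top hf
  have hD2 := contDiff_fderiv_top hD
  have key : ∀ a b c : E, fderiv ℝ (fderiv ℝ (fderiv ℝ f)) x a b c =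
      fderiv ℝ (fderiv ℝ (fderiv ℝ f)) x a c b := by
    intro a b c
    have h : ∀ b c : E, fderiv ℝ (fderiv ℝ (fderiv ℝ f)) x a b c =
        fderiv ℝ (fun y => fderiv ℝ (fderiv ℝ f) y b c) x a := by
      intro b c
      have h1 := ((diff_of_top hD2 x).hasFDerivAt.clm_apply (hasFDerivAt_const b x)).clm_apply
        (hasFDerivAt_const c x)
      rw [h1.fderiv]; simp
    rw [h, h]
    congr 2
    funext y
    exact symm2 hf y b c
  rw [symm2 hD x u v, key]

end helpers

lemma trace_zero {N : ℕ} (A : Matrix (Fin N) (Fin N) ℝ) (hA : A.transpose = -A)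
    (B : EuclideanSpace ℝ (Fin N) →L[ℝ] EuclideanSpace ℝ (Fin N) →L[ℝ] ℝ)
    (hB : ∀ u v, B u v = B v u) :
    ∑ i : Fin N, B (EuclideanSpace.single i (1 : ℝ))
      (Matrix.toEuclideanLin A (EuclideanSpace.single i (1 : ℝ))) = 0 := by
  have hA' : ∀ i j, A i j = - A j i := fun i j => by
    have := congrFun (congrFun hA j) i
    simpa using this
  have hT : ∀ i, Matrix.toEuclideanLin A (EuclideanSpace.single i (1 : ℝ))
      = ∑ j, A j i • EuclideanSpace.single j (1 : ℝ) := by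
    intro i
    ext k
    simp [Matrix.toEuclideanLin, Matrix.toLpLin_apply, Finset.sum_apply, Pi.single_apply]
  simp_rw [hT, map_sum, map_smul, smul_eq_mul]
  have h : ∀ s : ℝ, s = -s → s = 0 := fun s hs => by linarith
  apply h
  conv_lhs => rw [Finset.sum_comm]
  rw [← Finset.sum_neg_distrib]
  refine Finset.sum_congr rfl fun i _ => ?_
  rw [← Finset.sum_neg_distrib]
  refine Finset.sum_congr rfl fun j _ => ?_
  rw [hA' i j, hB]; ring

lemma skew_inner {N : ℕ} (A : Matrix (Fin N) (Fin N) ℝ) (hA : A.transpose = -A)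
    (u : EuclideanSpace ℝ (Fin N)) :
    inner ℝ u (Matrix.toEuclideanLin A u) = 0 := by
  have h : ∀ s : ℝ, s = -s → s = 0 := fun s hs => by linarith
  apply h
  have h1 : inner ℝ u (Matrix.toEuclideanLin A u) = u.ofLp ⬝ᵥ (A.mulVec u.ofLp) := by
    rw [real_inner_comm]
    simp [Matrix.toEuclideanLin, Matrix.toLpLin_apply, PiLp.inner_apply, dotProduct]
  rw [h1]
  conv_lhs => rw [Matrix.dotProduct_mulVec, ← Matrix.mulVec_transpose, hA, Matrix.neg_mulVec,
    neg_dotProduct, dotProduct_comm]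

/-- For a real skew-symmetric matrix `A`, the operators `(Sf)(x) = ⟨Ax, ∇f(x)⟩` and
`(Lf)(x) = (1/2)Δf(x) − (1/2)‖Ax‖² f(x)` commute on smooth functions. -/
theorem S_L_commute (N : ℕ) (A : Matrix (Fin N) (Fin N) ℝ) (hA : A.transpose = -A)
    (S L : (EuclideanSpace ℝ (Fin N) → ℝ) → (EuclideanSpace ℝ (Fin N) → ℝ))
    (hS : ∀ f x, S f x = (inner ℝ (Matrix.toEuclideanLin A x) (gradient f x) : ℝ))
    (hL : ∀ f x, L f x =
      (1 / 2) * lap f x - (1 / 2) * ‖Matrix.toEuclideanLin A x‖ ^ 2 * f x)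
    (f : EuclideanSpace ℝ (Fin N) → ℝ) (hf : ContDiff ℝ (⊤ : ℕ∞) f)
    (x : EuclideanSpace ℝ (Fin N)) :
    S (L f) x = L (S f) x := by
  obtain ⟨T, hT⟩ : ∃ T : EuclideanSpace ℝ (Fin N) →L[ℝ] EuclideanSpace ℝ (Fin N),
      ∀ y, Matrix.toEuclideanLin A y = T y :=
    ⟨LinearMap.toContinuousLinearMap (Matrix.toEuclideanLin A), fun y => rfl⟩
  have hS' : ∀ g, S g = fun y => fderiv ℝ g y (T y) := by
    intro g; funext y
    rw [hS, hT, real_inner_comm, gradient, InnerProductSpace.toDual_symm_apply]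
  have hD := contDiff_fderiv_top hf
  have hD2 := contDiff_fderiv_top hD
  have hsk := skew_inner A hA
  have htr := trace_zero A hA (fderiv ℝ (fderiv ℝ f) x) (symm2 hf x)
  simp_rw [hT] at hL hsk htr
  have hL' : L f = fun y => (1 / 2) * lap f y - (1 / 2) * ‖T y‖ ^ 2 * f y := funext (hL f)
  rw [hL (S f), hS' (L f), hL', hS' f]
  have hlapS : lap (fun y => fderiv ℝ f y (T y)) x =
      ∑ i : Fin N, fderiv ℝ (fderiv ℝ (fderiv ℝ f)) x (EuclideanSpace.single i (1 : ℝ))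
        (EuclideanSpace.single i (1 : ℝ)) (T x) := by
    unfold lap
    simp_rw [fderiv2_S hf, Finset.sum_add_distrib, htr]
    simp
  have hlap := HasFDerivAt.fun_sum (u := Finset.univ) fun (i : Fin N) _ =>
      ((diff_of_top hD2 x).hasFDerivAt.clm_apply
        (hasFDerivAt_const (EuclideanSpace.single i (1 : ℝ)) x)).clm_apply
        (hasFDerivAt_const (EuclideanSpace.single i (1 : ℝ)) x)
  change HasFDerivAt (lap f) _ x at hlap
  have hn := (T.hasFDerivAt (x := x)).norm_sq
  have htot := (hlap.const_mul (1 / 2)).fun_sub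
    ((hn.const_mul (1 / 2)).fun_mul (diff_of_top hf x).hasFDerivAt)
  rw [hlapS]
  simp only [htot.fderiv]
  simp [symm3 hf, hsk]
  try ring

end
end
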